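/- arXiv:2505.23610 — 2 statements merged into one kernel-verified Lean document; each statement's English description precedes it below -/
import Mathlib

section
/- Assume b_i c_i > 0 for all 1 ≤ i ≤ k. Let λ ∈ ℝ, α ∈ (−π, π], β ∈ ℝ, and suppose λ is an eigenvalue of the k×k complex matrix f(e^{−i(α+iβ)}), i.e. det(f(e^{−i(α+iβ)}) − λ·Id) = 0. Then α = 0, or α = π, or β = (1/2)·log(∏_{i=1}^k b_i/c_i). -/
/-!
Context: symbol of a tridiagonal k-Toeplitz operator. We use `k + 1` resonators
(indices `Fin (k+1)`), so that the paper's `k ≥ 1` is automatic.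
`matA0` is the tridiagonal block with diagonal `a`, superdiagonal `b`, subdiagonal `c`;
`matA1` has its only nonzero entry `c_k` at position `(1, k)` (Lean: `(0, last)`);
`matAm1` has its only nonzero entry `b_k` at position `(k, 1)` (Lean: `(last, 0)`).
The symbol is `f z = A_{-1} z⁻¹ + A_0 + A_1 z`.
-/

noncomputable def matA0 (k : ℕ) (a b c : Fin (k + 1) → ℝ) :
    Matrix (Fin (k + 1)) (Fin (k + 1)) ℂ :=
  Matrix.of fun i j =>
    if i = j then (a i : ℂ)
    else if (j : ℕ) = (i : ℕ) + 1 then (b i : ℂ)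
    else if (i : ℕ) = (j : ℕ) + 1 then (c j : ℂ)
    else 0

noncomputable def matA1 (k : ℕ) (c : Fin (k + 1) → ℝ) :
    Matrix (Fin (k + 1)) (Fin (k + 1)) ℂ :=
  Matrix.of fun i j => if i = 0 ∧ j = Fin.last k then (c (Fin.last k) : ℂ) else 0

noncomputable def matAm1 (k : ℕ) (b : Fin (k + 1) → ℝ) :
    Matrix (Fin (k + 1)) (Fin (k + 1)) ℂ :=
  Matrix.of fun i j => if i = Fin.last k ∧ j = 0 then (b (Fin.last k) : ℂ) else 0

/-- The symbol `f(z) = A_{-1} z⁻¹ + A_0 + A_1 z` of the tridiagonal k-Toeplitz operator. -/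
noncomputable def symb (k : ℕ) (a b c : Fin (k + 1) → ℝ) (z : ℂ) :
    Matrix (Fin (k + 1)) (Fin (k + 1)) ℂ :=
  z⁻¹ • matAm1 k b + matA0 k a b c + z • matA1 k c

/-!
Extend an eigenvector of the symbol quasi-periodically, with multiplier `z⁻¹`, to a solution `u` of
the three-term recurrence whose coefficients are the periodic extensions of `a - λ`, `b` and `c`.
Over one period the recurrence acts on `(u 0, u 1)` through a real `2 × 2` matrix of determinant
`∏ c i / b i`, and `z⁻¹` is an eigenvalue of this matrix. A nonreal eigenvalue `ρ` of a real
`2 × 2` matrix is accompanied by its conjugate, so `‖ρ‖ ^ 2` is the determinant.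
-/

section ThreeTermRecurrence

open scoped Matrix

variable {K L : Type*} [Field K] [CommRing L] [Algebra K L]

/-- The sequence `u` solves the three-term recurrence with coefficient sequences `C`, `A`, `B`,
where `C` multiplies the earliest of the three terms. -/
def IsThreeTermSolution (A B C : ℕ → K) (u : ℕ → L) : Prop :=
  ∀ n, C n • u n + A n • u (n + 1) + B n • u (n + 2) = 0

/-- The matrix taking `(u n, u (n + 1))` to `(u (n + 1), u (n + 2))` for every solution `u` of the
three-term recurrence. It has this property only when `B n ≠ 0`. -/
def transferMatrix (A B C : ℕ → K) (n : ℕ) : Matrix (Fin 2) (Fin 2) K :=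
  !![0, 1; -(C n / B n), -(A n / B n)]

/-- The product of the first `N` transfer matrices, which takes `(u 0, u 1)` to
`(u N, u (N + 1))`. -/
def monodromyMatrix (A B C : ℕ → K) : ℕ → Matrix (Fin 2) (Fin 2) K
  | 0 => 1
  | N + 1 => transferMatrix A B C N * monodromyMatrix A B C N

theorem det_transferMatrix (A B C : ℕ → K) (n : ℕ) :
    (transferMatrix A B C n).det = C n / B n := by
  simp [transferMatrix, Matrix.det_fin_two]

theorem det_monodromyMatrix (A B C : ℕ → K) (N : ℕ) :
    (monodromyMatrix A B C N).det = ∏ n ∈ Finset.range N, C n / B n := by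
  induction N with
  | zero => simp [monodromyMatrix]
  | succ N ih =>
    rw [monodromyMatrix, Matrix.det_mul, det_transferMatrix, ih, Finset.prod_range_succ, mul_comm]

theorem IsThreeTermSolution.transferMatrix_mulVec {A B C : ℕ → K} {u : ℕ → L}
    (hu : IsThreeTermSolution A B C u) {n : ℕ} (hB : B n ≠ 0) :
    (transferMatrix A B C n).map (algebraMap K L) *ᵥ ![u n, u (n + 1)] =
      ![u (n + 1), u (n + 2)] := by
  have hsolve : u (n + 2) = -(B n)⁻¹ • (C n • u n + A n • u (n + 1)) := by
    rw [eq_neg_of_add_eq_zero_left (hu n), smul_neg, neg_smul, neg_neg, inv_smul_smul₀ hB]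
  rw [hsolve]
  ext i
  fin_cases i
  · simp [transferMatrix, Matrix.mulVec, dotProduct]
  · suffices algebraMap K L (-(C n / B n)) * u n + algebraMap K L (-(A n / B n)) * u (n + 1) =
        -(B n)⁻¹ • (C n • u n + A n • u (n + 1)) by
      simpa [transferMatrix, Matrix.mulVec, dotProduct] using this
    simp only [← Algebra.smul_def]
    module

theorem IsThreeTermSolution.monodromyMatrix_mulVec {A B C : ℕ → K} {u : ℕ → L}
    (hu : IsThreeTermSolution A B C u) (hB : ∀ n, B n ≠ 0) (N : ℕ) :
    (monodromyMatrix A B C N).map (algebraMap K L) *ᵥ ![u 0, u 1] = ![u N, u (N + 1)] := by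
  induction N with
  | zero => simp [monodromyMatrix]
  | succ N ih =>
    rw [monodromyMatrix, Matrix.map_mul, ← Matrix.mulVec_mulVec, ih,
      hu.transferMatrix_mulVec (hB N)]

theorem IsThreeTermSolution.eq_zero {A B C : ℕ → K} {u : ℕ → L}
    (hu : IsThreeTermSolution A B C u) (hB : ∀ n, B n ≠ 0) (h0 : ![u 0, u 1] = 0) : u = 0 := by
  funext N
  have h := congrFun (hu.monodromyMatrix_mulVec hB N) 0
  rw [h0, Matrix.mulVec_zero] at h
  exact h.symm

end ThreeTermRecurrence

section FloquetMultiplier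

open scoped Matrix

theorem im_eq_zero_or_norm_sq_eq_of_quadratic {t d : ℝ} {ρ : ℂ} (hρ : ρ ^ 2 - t * ρ + d = 0) :
    ρ.im = 0 ∨ ‖ρ‖ ^ 2 = d := by
  have hre : ρ.re * ρ.re - ρ.im * ρ.im - t * ρ.re + d = 0 := by
    simpa [pow_two] using congrArg Complex.re hρ
  have him : ρ.re * ρ.im + ρ.im * ρ.re - t * ρ.im = 0 := by
    simpa [pow_two] using congrArg Complex.im hρ
  have hfactor : (2 * ρ.re - t) * ρ.im = 0 := by linear_combination him
  refine (mul_eq_zero.mp hfactor).symm.imp_right fun ht => ?_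
  rw [Complex.sq_norm, Complex.normSq_apply]
  linear_combination ρ.re * ht - hre

theorem im_eq_zero_or_norm_sq_eq_det {M : Matrix (Fin 2) (Fin 2) ℝ} {ρ : ℂ} {w : Fin 2 → ℂ}
    (hw : w ≠ 0) (hM : M.map (algebraMap ℝ ℂ) *ᵥ w = ρ • w) : ρ.im = 0 ∨ ‖ρ‖ ^ 2 = M.det := by
  have hdet : (Matrix.scalar (Fin 2) ρ - M.map (algebraMap ℝ ℂ)).det = 0 := by
    refine Matrix.exists_mulVec_eq_zero_iff.mp ⟨w, hw, ?_⟩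
    rw [Matrix.sub_mulVec, hM, Matrix.scalar_apply, ← Matrix.smul_one_eq_diagonal,
      Matrix.smul_mulVec, Matrix.one_mulVec, sub_self]
  refine im_eq_zero_or_norm_sq_eq_of_quadratic (t := M.trace) ?_
  rw [← Matrix.eval_charpoly, Matrix.charpoly_map, Matrix.charpoly_fin_two] at hdet
  simpa using hdet

theorem IsThreeTermSolution.im_eq_zero_or_norm_sq_eq_prod {A B C : ℕ → ℝ} {u : ℕ → ℂ}
    (hu : IsThreeTermSolution A B C u) (hB : ∀ n, B n ≠ 0) (hne : u ≠ 0) {ρ : ℂ} {N : ℕ}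
    (hρ : ∀ n, u (n + N) = ρ * u n) :
    ρ.im = 0 ∨ ‖ρ‖ ^ 2 = ∏ n ∈ Finset.range N, C n / B n := by
  rw [← det_monodromyMatrix A B C]
  refine im_eq_zero_or_norm_sq_eq_det (mt (hu.eq_zero hB) hne) ?_
  rw [hu.monodromyMatrix_mulVec hB, Matrix.smul_cons, Matrix.smul_cons, Matrix.smul_empty,
    smul_eq_mul, smul_eq_mul, ← hρ, ← hρ, zero_add, add_comm 1 N]

end FloquetMultiplier

section FloquetExtension

open scoped Fin.NatCast

variable {R : Type*} [Monoid R] {n : ℕ} [NeZero n]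

/-- The extension of `v` to a sequence that is multiplied by `ρ` under translation by `n`. -/
def floquetExtension (ρ : R) (v : Fin n → R) (m : ℕ) : R :=
  ρ ^ (m / n) * v m

theorem floquetExtension_add_period (ρ : R) (v : Fin n → R) (m : ℕ) :
    floquetExtension ρ v (m + n) = ρ * floquetExtension ρ v m := by
  simp [floquetExtension, Nat.add_div_right m (NeZero.pos n), pow_succ', mul_assoc]

theorem floquetExtension_val (ρ : R) (v : Fin n → R) (i : Fin n) :
    floquetExtension ρ v i = v i := by
  simp [floquetExtension, Nat.div_eq_of_lt i.isLt]

theorem pow_succ_div (ρ : R) (m : ℕ) :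
    ρ ^ ((m + 1) / n) = ρ ^ (m / n) * if (m : Fin n) + 1 = 0 then ρ else 1 := by
  have hwrap : (m : Fin n) + 1 = 0 ↔ n ∣ m + 1 := by
    rw [← Fin.natCast_eq_zero, Nat.cast_succ]
  simp only [Nat.succ_div, hwrap]
  split_ifs <;> simp [pow_succ]

end FloquetExtension

section Symbol

open scoped Matrix Fin.NatCast

variable {k : ℕ} (a b c : Fin (k + 1) → ℝ) (z : ℂ)

-- Indices are cyclic. For `k ≤ 1` some of the three positions coincide, which is why the entries
-- are written as sums rather than as nested conditionals.
theorem matA0_apply (i j : Fin (k + 1)) :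
    matA0 k a b c i j =
      (if j = i - 1 then (if i = 0 then 0 else (c j : ℂ)) else 0) +
      (if j = i then (a i : ℂ) else 0) +
      (if j = i + 1 then (if i + 1 = 0 then 0 else (b i : ℂ)) else 0) := by
  simp only [matA0, Matrix.of_apply, Fin.ext_iff, Fin.val_add_one, Fin.coe_sub_one, Fin.val_last,
    Fin.val_zero]
  split_ifs <;> first | omega | contradiction | simp

theorem matA1_apply (i j : Fin (k + 1)) :
    matA1 k c i j = if j = i - 1 then (if i = 0 then (c j : ℂ) else 0) else 0 := by
  have hlast : (-1 : Fin (k + 1)) = Fin.last k := neg_eq_of_add_eq_zero_left (Fin.last_add_one k)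
  by_cases hi : i = 0 <;> by_cases hj : j = Fin.last k <;> simp [matA1, hi, hj, hlast]

theorem matAm1_apply (i j : Fin (k + 1)) :
    matAm1 k b i j = if j = i + 1 then (if i + 1 = 0 then (b i : ℂ) else 0) else 0 := by
  have hwrap : i + 1 = 0 ↔ i = Fin.last k := by
    rw [← Fin.last_add_one k, add_left_inj]
  by_cases hi : i = Fin.last k <;> simp [matAm1, hi, hwrap]

theorem symb_apply (i j : Fin (k + 1)) :
    symb k a b c z i j =
      (if j = i - 1 then c j * (if i = 0 then z else 1) else 0) +
      (if j = i then (a i : ℂ) else 0) +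
      (if j = i + 1 then b i * (if i + 1 = 0 then z⁻¹ else 1) else 0) := by
  simp only [symb, Matrix.add_apply, Matrix.smul_apply, smul_eq_mul, matA0_apply, matA1_apply,
    matAm1_apply]
  split_ifs <;> ring

theorem symb_mulVec_apply (v : Fin (k + 1) → ℂ) (i : Fin (k + 1)) :
    (symb k a b c z *ᵥ v) i =
      c (i - 1) * ((if i = 0 then z else 1) * v (i - 1)) + a i * v i +
        b i * ((if i + 1 = 0 then z⁻¹ else 1) * v (i + 1)) := by
  simp [Matrix.mulVec, dotProduct, symb_apply, add_mul, Finset.sum_add_distrib, mul_assoc]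

theorem prod_range_cyclic_div :
    ∏ n ∈ Finset.range (k + 1), c (n : Fin (k + 1)) / b ((n : Fin (k + 1)) + 1) =
      ∏ i, c i / b i := by
  simp only [Finset.prod_range, Fin.cast_val_eq_self, Finset.prod_div_distrib]
  exact congrArg _ (Equiv.prod_comp (Equiv.addRight (1 : Fin (k + 1))) b)

variable {a b c z}

theorem isThreeTermSolution_floquetExtension {v : Fin (k + 1) → ℂ} {lam : ℝ} (hz : z ≠ 0)
    (hv : symb k a b c z *ᵥ v = (lam : ℂ) • v) :
    IsThreeTermSolution (fun n => a ((n : Fin (k + 1)) + 1) - lam)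
      (fun n => b ((n : Fin (k + 1)) + 1)) (fun n => c (n : Fin (k + 1)))
      (floquetExtension z⁻¹ v) := by
  intro n
  have hrow := congrFun hv ((n : Fin (k + 1)) + 1)
  rw [symb_mulVec_apply, add_sub_cancel_right, Pi.smul_apply, smul_eq_mul] at hrow
  have hwrap : z⁻¹ ^ ((n + 1) / (k + 1)) * (if (n : Fin (k + 1)) + 1 = 0 then z else 1) =
      z⁻¹ ^ (n / (k + 1)) := by
    rw [pow_succ_div]
    split_ifs <;> simp [hz]
  have hwrap_succ := pow_succ_div (n := k + 1) z⁻¹ (n + 1)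
  simp only [floquetExtension, Complex.real_smul, Complex.ofReal_sub, ← hwrap, hwrap_succ,
    Nat.cast_succ]
  linear_combination z⁻¹ ^ ((n + 1) / (k + 1)) * hrow

theorem im_eq_zero_or_prod_eq_norm_sq_of_det_symb_sub_eq_zero (hb : ∀ i, b i ≠ 0) {lam : ℝ}
    (hev : (symb k a b c z - (lam : ℂ) • (1 : Matrix (Fin (k + 1)) (Fin (k + 1)) ℂ)).det = 0) :
    z.im = 0 ∨ ∏ i, b i / c i = ‖z‖ ^ 2 := by
  rcases eq_or_ne z 0 with rfl | hz
  · exact .inl Complex.zero_im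
  obtain ⟨v, hv0, hv⟩ := Matrix.exists_mulVec_eq_zero_iff.mpr hev
  rw [Matrix.sub_mulVec, Matrix.smul_mulVec, Matrix.one_mulVec, sub_eq_zero] at hv
  have hne : floquetExtension z⁻¹ v ≠ 0 := fun h =>
    hv0 <| funext fun i => floquetExtension_val z⁻¹ v i ▸ congrFun h i
  have hmult := (isThreeTermSolution_floquetExtension hz hv).im_eq_zero_or_norm_sq_eq_prod
    (fun _ => hb _) hne (floquetExtension_add_period z⁻¹ v)
  rw [prod_range_cyclic_div] at hmult
  refine hmult.imp (fun him => ?_) fun hnorm => ?_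
  · simpa [Complex.inv_im, hz] using him
  · rw [← inv_inj, ← Finset.prod_inv_distrib, ← inv_pow, ← norm_inv, hnorm]
    simp only [inv_div]

end Symbol

/-- Comparing the product with `exp (2 * β)` rather than `β` with a logarithm avoids the junk values
of `Real.log` and of division by `c i = 0`. -/
theorem statement0_general (k : ℕ) (a b c : Fin (k + 1) → ℝ) (hb : ∀ i, b i ≠ 0)
    (lam α β : ℝ) (hα : α ∈ Set.Ioc (-Real.pi) Real.pi)
    (hev :
      (symb k a b c (Complex.exp (-Complex.I * ((α : ℂ) + Complex.I * (β : ℂ))))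
          - (lam : ℂ) • (1 : Matrix (Fin (k + 1)) (Fin (k + 1)) ℂ)).det = 0) :
    α = 0 ∨ α = Real.pi ∨ ∏ i, b i / c i = Real.exp (2 * β) := by
  rcases im_eq_zero_or_prod_eq_norm_sq_of_det_symb_sub_eq_zero hb hev with him | hprod
  · have hsin : Real.sin α = 0 := by simpa [Complex.exp_im] using him
    rcases hα.2.lt_or_eq with hlt | heq
    · exact .inl ((Real.sin_eq_zero_iff_of_lt_of_lt hα.1 hlt).mp hsin)
    · exact .inr (.inl heq)
  · refine .inr (.inr ?_)
    rw [hprod, Complex.norm_exp, ← Real.exp_nat_mul]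
    simp

/-- if `b_i c_i > 0` for all `i`, `λ ∈ ℝ`, `α ∈ (-π, π]`, `β ∈ ℝ` and `λ` is an
eigenvalue of `f(e^{-i(α+iβ)})`, then `α = 0`, or `α = π`, or
`β = (1/2) log (∏ b_i / c_i)`. -/
theorem statement0 (k : ℕ) (a b c : Fin (k + 1) → ℝ)
    (hbc : ∀ i, 0 < b i * c i)
    (lam α β : ℝ) (hα : α ∈ Set.Ioc (-Real.pi) Real.pi)
    (hev :
      (symb k a b c (Complex.exp (-Complex.I * ((α : ℂ) + Complex.I * (β : ℂ))))
          - (lam : ℂ) • (1 : Matrix (Fin (k + 1)) (Fin (k + 1)) ℂ)).det = 0) :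
    α = 0 ∨ α = Real.pi ∨ β = (1 / 2) * Real.log (∏ i, b i / c i) := by
  have hb (i) : b i ≠ 0 := left_ne_zero_of_mul (hbc i).ne'
  exact (statement0_general k a b c hb lam α β hα hev).imp_right <| .imp_right fun h => by simp [h]
end

section
/- Let n ≥ 1, let a, b, c ∈ ℝ with bc > 0, set d := a/(2√(bc)), and assume U_n(d) ≠ 0. Let A be the n×n tridiagonal Toeplitz matrix with diagonal entries a, entry b in each position (i, i+1) and entry c in each position (i+1, i). Then A is invertible and, for all 1 ≤ i, j ≤ n: (A^{−1})_{ij} = (−1)^{i+j} · b^{j−i} · (√(bc))^{−(j−i+1)} · U_{i−1}(d)·U_{n−j}(d)/U_n(d) if i ≤ j, and (A^{−1})_{ij} = (−1)^{i+j} · c^{i−j} · (√(bc))^{−(i−j+1)} · U_{j−1}(d)·U_{n−i}(d)/U_n(d) if i > j. -/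
/-- Chebyshev polynomials of the second kind (as real functions):
`U₀ = 1`, `U₁(x) = 2x`, `U_{m+2}(x) = 2x U_{m+1}(x) - U_m(x)`. -/
noncomputable def chebU : ℕ → ℝ → ℝ
  | 0, _ => 1
  | 1, x => 2 * x
  | n + 2, x => 2 * x * chebU (n + 1) x - chebU n x

/-- The `n × n` tridiagonal Toeplitz matrix with diagonal `a`, entry `b` in positions
`(i, i+1)` and entry `c` in positions `(i+1, i)`. -/
noncomputable def triToep (n : ℕ) (a b c : ℝ) : Matrix (Fin n) (Fin n) ℝ :=
  Matrix.of fun i j =>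
    if i = j then a
    else if (j : ℕ) = (i : ℕ) + 1 then b
    else if (i : ℕ) = (j : ℕ) + 1 then c
    else 0

/-!
Let `s` be a square root of `b * c`, `d = a / (2 * s)` and `p = -b / s`. Conjugation by the diagonal
matrix with entries `p ^ i` turns the matrix into `s` times the symmetric matrix with diagonal
entries `2 * d` and off-diagonal entries `-1`. Up to the factor `U_n(d)`, the inverse of the latter
is the Green's function `U_{min i j}(d) * U_{n - 1 - max i j}(d)`: in each variable, `U` solves the
three-term recurrence away from the diagonal, it vanishes at the boundary because `U_{-1} = 0`, and
the jump across the diagonal is the Wronskian `U_n`, by the addition formula for `U`.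
-/

open Polynomial Polynomial.Chebyshev Matrix

theorem chebU_eq_eval_U (x : ℝ) : ∀ m : ℕ, chebU m x = (U ℝ m).eval x
  | 0 => by simp [chebU]
  | 1 => by simp [chebU]
  | m + 2 => by simp [chebU, chebU_eq_eval_U x m, chebU_eq_eval_U x (m + 1), U_add_two]

section ChebyshevGreen

variable (R : Type*) [CommRing R]

theorem chebyshev_U_add_add_one (m k : ℤ) :
    U R (m + k + 1) = U R (m + 1) * U R k - U R m * U R (k - 1) := by
  induction m generalizing k with
  | zero => simp [U_add_one]
  | succ m ih =>
    rw [show (m + 1 + k + 1 : ℤ) = m + (k + 1) + 1 by ring, ih, U_add_one R (m + 1), U_add_one R k]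
    simp only [add_sub_cancel_right]
    ring
  | pred m ih =>
    rw [show (-m - 1 + k + 1 : ℤ) = -m + (k - 1) + 1 by ring, ih, sub_add_cancel, U_sub_one R (-m),
      U_sub_one R (k - 1), sub_add_cancel]
    ring

/-- The Green's function of the operator `u ↦ 2 * X * u i - u (i - 1) - u (i + 1)` on
`{0, …, n - 1}` with zero boundary values at `-1` and `n`, multiplied by `U R n` to clear
denominators. Integer indices make the boundary values available. -/
noncomputable def chebyshevGreen (n i j : ℤ) : R[X] :=
  U R (min i j) * U R (n - 1 - max i j)

variable {n j : ℤ}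

theorem chebyshevGreen_neg_one_left (hj : -1 ≤ j) : chebyshevGreen R n (-1) j = 0 := by
  rw [chebyshevGreen, min_eq_left hj, U_neg_one, zero_mul]

theorem chebyshevGreen_self_left (hj : j ≤ n) : chebyshevGreen R n n j = 0 := by
  rw [chebyshevGreen, max_eq_left hj, sub_sub_cancel_left, U_neg_one, mul_zero]

theorem chebyshevGreen_of_le {i : ℤ} (h : i ≤ j) :
    chebyshevGreen R n i j = U R i * U R (n - 1 - j) := by
  rw [chebyshevGreen, min_eq_left h, max_eq_right h]

theorem chebyshevGreen_of_ge {i : ℤ} (h : j ≤ i) :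
    chebyshevGreen R n i j = U R j * U R (n - 1 - i) := by
  rw [chebyshevGreen, min_eq_right h, max_eq_left h]

theorem two_mul_X_mul_chebyshevGreen_sub (n i j : ℤ) :
    2 * X * chebyshevGreen R n i j - chebyshevGreen R n (i - 1) j - chebyshevGreen R n (i + 1) j
      = if i = j then U R n else 0 := by
  rcases lt_trichotomy i j with h | rfl | h
  · rw [chebyshevGreen_of_le R h.le, chebyshevGreen_of_le R (by lia),
      chebyshevGreen_of_le R (by lia), if_neg h.ne, U_add_one]
    ring
  · have wronskian := chebyshev_U_add_add_one R i (n - 1 - i)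
    rw [add_sub_cancel, sub_add_cancel, U_add_one] at wronskian
    rw [chebyshevGreen_of_le R le_rfl, chebyshevGreen_of_le R (by lia),
      chebyshevGreen_of_ge R (by lia), if_pos rfl, wronskian, sub_sub (n - 1) i 1]
    ring
  · have recurrence := U_add_one R (n - 1 - i)
    rw [sub_sub (n - 1) i 1, show n - 1 - i + 1 = n - 1 - (i - 1) by ring] at recurrence
    rw [chebyshevGreen_of_ge R h.le, chebyshevGreen_of_ge R (by lia),
      chebyshevGreen_of_ge R (by lia), if_neg h.ne', recurrence]
    ring

end ChebyshevGreen

/-- The tridiagonal Toeplitz matrix with diagonal `a`, superdiagonal `b` and subdiagonal `c`: the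
generalization of `triToep` to entries in an arbitrary type with zero. -/
def tridiagonalToeplitz {R : Type*} [Zero R] (n : ℕ) (a b c : R) : Matrix (Fin n) (Fin n) R :=
  Matrix.of fun i j =>
    if i = j then a
    else if (j : ℕ) = (i : ℕ) + 1 then b
    else if (i : ℕ) = (j : ℕ) + 1 then c
    else 0

theorem triToep_eq_tridiagonalToeplitz (n : ℕ) (a b c : ℝ) :
    triToep n a b c = tridiagonalToeplitz n a b c :=
  rfl

theorem tridiagonalToeplitz_transpose {R : Type*} [Zero R] (n : ℕ) (a b c : R) :
    (tridiagonalToeplitz n a b c)ᵀ = tridiagonalToeplitz n a c b := by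
  ext i j
  simp only [tridiagonalToeplitz, transpose_apply, of_apply]
  grind

theorem tridiagonalToeplitz_smul {S R : Type*} [Zero R] [SMulZeroClass S R] (n : ℕ) (r : S)
    (a b c : R) :
    r • tridiagonalToeplitz n a b c = tridiagonalToeplitz n (r • a) (r • b) (r • c) := by
  ext i j
  simp only [tridiagonalToeplitz, Matrix.smul_apply, of_apply, smul_ite, smul_zero]

theorem sum_fin_ite_natCast_eq {M : Type*} [AddCommMonoid M] {n : ℕ} {f : ℤ → M} {m : ℤ}
    (hf : ¬(0 ≤ m ∧ m < n) → f m = 0) :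
    ∑ k : Fin n, (if (k : ℤ) = m then f k else 0) = f m := by
  by_cases hm : 0 ≤ m ∧ m < n
  · lift m to ℕ using hm.1
    have hmn : m < n := by lia
    simpa [Fin.ext_iff] using Finset.sum_ite_eq' Finset.univ (⟨m, hmn⟩ : Fin n) fun k => f k
  · rw [hf hm]
    exact Finset.sum_eq_zero fun k _ => if_neg (by omega)

theorem tridiagonalToeplitz_apply_eq_add {R : Type*} [AddZeroClass R] {n : ℕ} (a b c : R)
    (i k : Fin n) :
    tridiagonalToeplitz n a b c i k = (if (k : ℤ) = i then a else 0)
      + (if (k : ℤ) = i + 1 then b else 0) + (if (k : ℤ) = i - 1 then c else 0) := by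
  simp only [tridiagonalToeplitz, of_apply, Fin.ext_iff]
  split_ifs <;> first | lia | simp only [add_zero, zero_add]

theorem tridiagonalToeplitz_mulVec_apply {R : Type*} [NonUnitalNonAssocSemiring R] {n : ℕ}
    (a b c : R) {g : ℤ → R} (hg_left : g (-1) = 0) (hg_right : g n = 0) (i : Fin n) :
    (tridiagonalToeplitz n a b c *ᵥ fun k : Fin n => g k) i
      = a * g i + b * g (i + 1) + c * g (i - 1) := by
  have sum_eq (r : R) (m : ℤ) (hm_left : -1 ≤ m) (hm_right : m ≤ n) :
      ∑ k : Fin n, (if (k : ℤ) = m then r * g k else 0) = r * g m := by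
    refine sum_fin_ite_natCast_eq (f := fun k => r * g k) fun hm => ?_
    obtain rfl | rfl : m = -1 ∨ m = n := by lia
    · rw [hg_left, mul_zero]
    · rw [hg_right, mul_zero]
  simp only [mulVec, dotProduct, tridiagonalToeplitz_apply_eq_add, add_mul, ite_mul, zero_mul,
    Finset.sum_add_distrib]
  rw [sum_eq a i (by omega) (by omega), sum_eq b (i + 1) (by omega) (by omega),
    sum_eq c (i - 1) (by omega) (by omega)]

theorem tridiagonalToeplitz_mul_chebyshevGreen {R : Type*} [CommRing R] (n : ℕ) (x : R) :
    tridiagonalToeplitz n (2 * x) (-1) (-1)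
        * Matrix.of (fun i j : Fin n => (chebyshevGreen R n i j).eval x)
      = (U R n).eval x • 1 := by
  ext i j
  have hj : (j : ℤ) ≤ n := by exact_mod_cast j.isLt.le
  have row := tridiagonalToeplitz_mulVec_apply (2 * x) (-1) (-1)
    (g := fun k => (chebyshevGreen R n k j).eval x)
    (by rw [chebyshevGreen_neg_one_left R (by lia), eval_zero])
    (by rw [chebyshevGreen_self_left R hj, eval_zero]) i
  have green := congrArg (eval x) (two_mul_X_mul_chebyshevGreen_sub R n i j)
  calc _ = 2 * x * (chebyshevGreen R n i j).eval x + -1 * (chebyshevGreen R n (i + 1) j).eval x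
        + -1 * (chebyshevGreen R n (i - 1) j).eval x := row
    _ = (if (i : ℤ) = j then U R n else 0).eval x := by
      rw [← green]
      simp only [eval_sub, eval_mul, eval_ofNat, eval_X]
      ring
    _ = ((U R n).eval x • (1 : Matrix (Fin n) (Fin n) R)) i j := by
      obtain rfl | hij := eq_or_ne i j
      · simp
      · simp [hij, Fin.val_ne_of_ne hij]

section DiagonalConjugation

variable {K : Type*} [Field K] {n : ℕ}

/-- For `p ≠ 0`, the conjugate `D⁻¹ * A * D`, where `D` is the diagonal matrix with entries
`p ^ i`. It is given entrywise, so that no inverse matrix occurs. -/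
def diagPowConj (p : K) (A : Matrix (Fin n) (Fin n) K) : Matrix (Fin n) (Fin n) K :=
  Matrix.of fun i j => p ^ ((j : ℤ) - i) * A i j

theorem diagPowConj_one (p : K) : diagPowConj p (1 : Matrix (Fin n) (Fin n) K) = 1 := by
  ext i j
  obtain rfl | hij := eq_or_ne i j <;> simp [diagPowConj, *]

theorem diagPowConj_smul (p r : K) (A : Matrix (Fin n) (Fin n) K) :
    diagPowConj p (r • A) = r • diagPowConj p A := by
  ext i j
  simp [diagPowConj, mul_left_comm]

theorem diagPowConj_mul {p : K} (hp : p ≠ 0) (A B : Matrix (Fin n) (Fin n) K) :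
    diagPowConj p A * diagPowConj p B = diagPowConj p (A * B) := by
  ext i j
  simp only [diagPowConj, mul_apply, of_apply, Finset.mul_sum]
  refine Finset.sum_congr rfl fun k _ => ?_
  rw [mul_mul_mul_comm, ← zpow_add₀ hp, sub_add_sub_cancel']

theorem diagPowConj_tridiagonalToeplitz (p a b c : K) :
    diagPowConj p (tridiagonalToeplitz n a b c)
      = tridiagonalToeplitz n a (p * b) (p⁻¹ * c) := by
  ext i j
  simp only [diagPowConj, tridiagonalToeplitz, of_apply]
  split_ifs with hij hj hi
  · simp [hij]
  · simp [hj]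
  · simp [hi]
  · simp

end DiagonalConjugation

section Inverse

variable {K : Type*} [Field K] {n : ℕ} {a b c s d : K}

theorem tridiagonalToeplitz_eq_smul_diagPowConj (hs : s ≠ 0) (hsq : s ^ 2 = b * c)
    (ha : a = 2 * s * d) :
    tridiagonalToeplitz n a b c
      = s • diagPowConj (-b / s) (tridiagonalToeplitz n (2 * d) (-1) (-1)) := by
  have hb : b ≠ 0 := by rintro rfl; simp [hs] at hsq
  have hb_scaled : s * (-b / s * -1) = b := by field_simp
  have hc_scaled : s * ((-b / s)⁻¹ * -1) = c := by
    field_simp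
    exact hsq
  rw [diagPowConj_tridiagonalToeplitz, tridiagonalToeplitz_smul, smul_eq_mul, smul_eq_mul,
    smul_eq_mul, hb_scaled, hc_scaled, ha]
  congr 1
  ring

theorem tridiagonalToeplitz_mul_smul_diagPowConj_chebyshevGreen (hs : s ≠ 0)
    (hsq : s ^ 2 = b * c) (ha : a = 2 * s * d) (hU : (U K n).eval d ≠ 0) :
    tridiagonalToeplitz n a b c * (s * (U K n).eval d)⁻¹ • diagPowConj (-b / s)
        (Matrix.of fun i j : Fin n => (chebyshevGreen K n i j).eval d) = 1 := by
  have hb : b ≠ 0 := by rintro rfl; simp [hs] at hsq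
  have hp : -b / s ≠ 0 := div_ne_zero (neg_ne_zero.mpr hb) hs
  rw [tridiagonalToeplitz_eq_smul_diagPowConj hs hsq ha, Matrix.smul_mul, Matrix.mul_smul,
    diagPowConj_mul hp, tridiagonalToeplitz_mul_chebyshevGreen, diagPowConj_smul, diagPowConj_one,
    smul_smul, smul_smul, mul_right_comm, mul_inv_cancel₀ (mul_ne_zero hs hU), one_smul]

theorem tridiagonalToeplitz_inv_apply_of_le (hs : s ≠ 0) (hsq : s ^ 2 = b * c)
    (ha : a = 2 * s * d) (hU : (U K n).eval d ≠ 0) {i j : Fin n} (hij : i ≤ j) :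
    (tridiagonalToeplitz n a b c)⁻¹ i j
      = (-1) ^ ((i : ℕ) + (j : ℕ)) * b ^ ((j : ℕ) - (i : ℕ)) * s ^ (-((j : ℤ) - (i : ℤ) + 1))
        * (U K (i : ℕ)).eval d * (U K (n - 1 - j : ℕ)).eval d / (U K n).eval d := by
  rw [inv_eq_right_inv (tridiagonalToeplitz_mul_smul_diagPowConj_chebyshevGreen hs hsq ha hU)]
  obtain ⟨k, hk⟩ := Nat.exists_eq_add_of_le (Fin.le_def.mp hij)
  have sign : (-1 : K) ^ ((i : ℕ) + (i + k)) = (-1) ^ k := by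
    rw [← add_assoc, pow_add, Even.neg_one_pow ⟨i, rfl⟩, one_mul]
  have diff : ((i + k : ℕ) : ℤ) - i = k := by lia
  have mirror : ((n - 1 - (i + k) : ℕ) : ℤ) = n - 1 - (i + k : ℕ) := by lia
  simp only [Matrix.smul_apply, diagPowConj, of_apply, smul_eq_mul, hk]
  rw [chebyshevGreen_of_le K (by lia), eval_mul, diff, mirror, sign, Nat.add_sub_cancel_left,
    zpow_natCast, _root_.zpow_neg, zpow_add_one₀ hs, zpow_natCast, div_pow, neg_pow b]
  field_simp

theorem statement12_general (hs : s ≠ 0) (hsq : s ^ 2 = b * c) (ha : a = 2 * s * d)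
    (hU : (U K n).eval d ≠ 0) :
    IsUnit (tridiagonalToeplitz n a b c) ∧
    ∀ i j : Fin n,
      ((i : ℕ) ≤ (j : ℕ) →
        (tridiagonalToeplitz n a b c)⁻¹ i j
          = (-1) ^ ((i : ℕ) + (j : ℕ)) * b ^ ((j : ℕ) - (i : ℕ))
            * s ^ (-(((j : ℕ) : ℤ) - ((i : ℕ) : ℤ) + 1))
            * (U K (i : ℕ)).eval d * (U K (n - 1 - j : ℕ)).eval d / (U K n).eval d) ∧
      ((j : ℕ) < (i : ℕ) →
        (tridiagonalToeplitz n a b c)⁻¹ i j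
          = (-1) ^ ((i : ℕ) + (j : ℕ)) * c ^ ((i : ℕ) - (j : ℕ))
            * s ^ (-(((i : ℕ) : ℤ) - ((j : ℕ) : ℤ) + 1))
            * (U K (j : ℕ)).eval d * (U K (n - 1 - i : ℕ)).eval d / (U K n).eval d) := by
  refine ⟨.of_mul_eq_one _
    (tridiagonalToeplitz_mul_smul_diagPowConj_chebyshevGreen hs hsq ha hU), fun i j =>
    ⟨fun hij => tridiagonalToeplitz_inv_apply_of_le hs hsq ha hU hij, fun hji => ?_⟩⟩
  rw [← tridiagonalToeplitz_transpose, ← transpose_nonsing_inv, transpose_apply, add_comm (i : ℕ)]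
  exact tridiagonalToeplitz_inv_apply_of_le hs (hsq.trans (mul_comm b c)) ha hU hji.le

end Inverse

/-- explicit inverse of a tridiagonal Toeplitz matrix via Chebyshev
polynomials of the second kind, with `d := a/(2√(bc))` and `U_n(d) ≠ 0`.
(Indices here are 0-based: the paper's `(i, j)` with `1 ≤ i ≤ j ≤ n` corresponds to
`(i-1, j-1)`, so `U_{i-1}` reads `chebU i` etc.) -/
theorem statement12 (n : ℕ) (hn : 1 ≤ n) (a b c : ℝ) (hbc : 0 < b * c)
    (d : ℝ) (hd : d = a / (2 * Real.sqrt (b * c))) (hU : chebU n d ≠ 0) :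
    IsUnit (triToep n a b c) ∧
    ∀ i j : Fin n,
      ((i : ℕ) ≤ (j : ℕ) →
        (triToep n a b c)⁻¹ i j
          = (-1 : ℝ) ^ ((i : ℕ) + (j : ℕ)) * b ^ ((j : ℕ) - (i : ℕ))
            * Real.sqrt (b * c) ^ (-(((j : ℕ) : ℤ) - ((i : ℕ) : ℤ) + 1))
            * chebU (i : ℕ) d * chebU (n - 1 - (j : ℕ)) d / chebU n d) ∧
      ((j : ℕ) < (i : ℕ) →
        (triToep n a b c)⁻¹ i j
          = (-1 : ℝ) ^ ((i : ℕ) + (j : ℕ)) * c ^ ((i : ℕ) - (j : ℕ))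
            * Real.sqrt (b * c) ^ (-(((i : ℕ) : ℤ) - ((j : ℕ) : ℤ) + 1))
            * chebU (j : ℕ) d * chebU (n - 1 - (i : ℕ)) d / chebU n d) := by
  have hs : √(b * c) ≠ 0 := (Real.sqrt_pos.mpr hbc).ne'
  have ha : a = 2 * √(b * c) * d := by rw [hd]; field_simp
  simpa only [chebU_eq_eval_U, triToep_eq_tridiagonalToeplitz] using
    statement12_general hs (Real.sq_sqrt hbc.le) ha (chebU_eq_eval_U d n ▸ hU)
end
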